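/- Assume in addition T ≤ √2 (1−μ). Then the function f is strictly increasing on (1−μ, ∞), f(x) → −∞ as x → (1−μ) from the right, and f(x) → +∞ as x → +∞. Consequently there exists a unique collinear equilibrium point x₂ ∈ (1−μ, ∞) with f(x₂) = 0. -/

import Mathlib

/-- Collinear equilibrium function of the generalized photogravitational
Chermnykh problem. -/
noncomputable def fcol (μ q₁ A₂ Mb T n x : ℝ) : ℝ :=
  n ^ 2 * x
    - (1 - μ) * q₁ * (x + μ) / |x + μ| ^ 3
    - μ * (x + μ - 1) / |x + μ - 1| ^ 3
    - (3 / 2) * μ * A₂ * (x + μ - 1) / |x + μ - 1| ^ 5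
    - Mb * x / (x ^ 2 + T ^ 2) ^ ((3 : ℝ) / 2)

lemma fcol_g_anti (T a b : ℝ) (ha : 0 < a) (hab : a < b) (hT : T ^ 2 ≤ 2 * a ^ 2) (hT0 : 0 < T) :
    b / (b ^ 2 + T ^ 2) ^ ((3 : ℝ) / 2) ≤ a / (a ^ 2 + T ^ 2) ^ ((3 : ℝ) / 2) := by
  have hb : 0 < b := ha.trans hab
  have key : ∀ s : ℝ, 0 ≤ s → (s ^ ((3 : ℝ) / 2)) ^ 2 = s ^ 3 := by
    intro s hs
    rw [← Real.rpow_natCast, ← Real.rpow_mul hs, ← Real.rpow_natCast]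
    norm_num
  have hA : 0 < a ^ 2 := by positivity
  have ht : 0 < T ^ 2 := by positivity
  have hAB : a ^ 2 < b ^ 2 := by nlinarith
  refine (pow_le_pow_iff_left₀ (by positivity) (by positivity) two_ne_zero).1 ?_
  rw [div_pow, div_pow, key _ (by positivity), key _ (by positivity),
    div_le_div_iff₀ (by positivity) (by positivity)]
  generalize a ^ 2 = A at *
  generalize b ^ 2 = B at *
  generalize T ^ 2 = t at *
  have h1 : 0 ≤ A * B * (A + B) + 3 * A * B * t - t ^ 3 := by
    have e1 : A * A ≤ A * B := by nlinarith
    have e2 : A * A * t ≤ A * B * t := by nlinarith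
    have e3 : A * A * t ≤ A * B * (A + B) := by
      have : A * A * t ≤ A * A * (A + B) := by
        apply mul_le_mul_of_nonneg_left _ (by positivity); linarith
      have : A * A * (A + B) ≤ A * B * (A + B) :=
        mul_le_mul_of_nonneg_right e1 (by linarith)
      linarith
    have e4 : t ^ 2 ≤ 4 * (A * A) := by nlinarith
    have e5 : t ^ 3 ≤ 4 * (A * A) * t := by nlinarith
    nlinarith
  nlinarith [mul_nonneg (sub_nonneg.2 hAB.le) h1]

lemma fcol_eq (μ q₁ A₂ Mb T n x : ℝ) (hμ0 : 0 < μ) (hx : 1 - μ < x) :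
    fcol μ q₁ A₂ Mb T n x = n ^ 2 * x - ((1 - μ) * q₁ / (x + μ) ^ 2 + μ / (x + μ - 1) ^ 2
      + (3 / 2) * μ * A₂ / (x + μ - 1) ^ 4 + Mb * (x / (x ^ 2 + T ^ 2) ^ ((3 : ℝ) / 2))) := by
  have h1 : 0 < x + μ - 1 := by linarith
  have h2 : 0 < x + μ := by linarith
  unfold fcol
  rw [abs_of_pos h1, abs_of_pos h2, mul_div_assoc Mb]
  generalize x / (x ^ 2 + T ^ 2) ^ ((3 : ℝ) / 2) = g
  have e1 : (1 - μ) * q₁ * (x + μ) / (x + μ) ^ 3 = (1 - μ) * q₁ / (x + μ) ^ 2 := by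
    field_simp
  have e2 : μ * (x + μ - 1) / (x + μ - 1) ^ 3 = μ / (x + μ - 1) ^ 2 := by
    field_simp
  have e3 : (3 / 2) * μ * A₂ * (x + μ - 1) / (x + μ - 1) ^ 5
      = (3 / 2) * μ * A₂ / (x + μ - 1) ^ 4 := by
    field_simp
  rw [e1, e2, e3]; ring

theorem collinear_point_right
    (μ q₁ A₂ Mb T n : ℝ)
    (hμ0 : 0 < μ) (hμ1 : μ < 1 / 2) (hq0 : 0 < q₁) (hq1 : q₁ ≤ 1)
    (hA : 0 ≤ A₂) (hM : 0 ≤ Mb) (hT : 0 < T) (hn : 0 < n)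
    (hT2 : T ≤ Real.sqrt 2 * (1 - μ)) :
    StrictMonoOn (fcol μ q₁ A₂ Mb T n) (Set.Ioi (1 - μ)) ∧
    Filter.Tendsto (fcol μ q₁ A₂ Mb T n)
      (nhdsWithin (1 - μ) (Set.Ioi (1 - μ))) Filter.atBot ∧
    Filter.Tendsto (fcol μ q₁ A₂ Mb T n) Filter.atTop Filter.atTop ∧
    ∃! x₂, x₂ ∈ Set.Ioi (1 - μ) ∧ fcol μ q₁ A₂ Mb T n x₂ = 0 := by
  have hm : 0 < 1 - μ := by linarith
  have hTsq : T ^ 2 ≤ 2 * (1 - μ) ^ 2 := by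
    have := pow_le_pow_left₀ hT.le hT2 2
    rwa [mul_pow, Real.sq_sqrt (by norm_num)] at this
  have hstep : ∀ a b : ℝ, 1 - μ < a → a < b →
      n ^ 2 * (b - a) ≤ fcol μ q₁ A₂ Mb T n b - fcol μ q₁ A₂ Mb T n a := by
    intro a b ha hab
    rw [fcol_eq _ _ _ _ _ _ a hμ0 ha, fcol_eq _ _ _ _ _ _ b hμ0 (ha.trans hab)]
    have p1 : 0 < a + μ - 1 := by linarith
    have p2 : 0 < a + μ := by linarith
    have g1 : (1 - μ) * q₁ / (b + μ) ^ 2 ≤ (1 - μ) * q₁ / (a + μ) ^ 2 := by gcongr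
    have g2 : μ / (b + μ - 1) ^ 2 ≤ μ / (a + μ - 1) ^ 2 := by gcongr
    have g3 : (3 / 2) * μ * A₂ / (b + μ - 1) ^ 4 ≤ (3 / 2) * μ * A₂ / (a + μ - 1) ^ 4 := by
      gcongr
    have g4 := mul_le_mul_of_nonneg_left
      (fcol_g_anti T a b (hm.trans ha) hab (by nlinarith) hT) hM
    linarith
  have hmono : StrictMonoOn (fcol μ q₁ A₂ Mb T n) (Set.Ioi (1 - μ)) := by
    intro a ha b hb hab
    have := hstep a b ha hab
    have : 0 < n ^ 2 * (b - a) := mul_pos (by positivity) (sub_pos.2 hab)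
    linarith
  have hbot : Filter.Tendsto (fcol μ q₁ A₂ Mb T n)
      (nhdsWithin (1 - μ) (Set.Ioi (1 - μ))) Filter.atBot := by
    have hu : Filter.Tendsto (fun x : ℝ => n ^ 2 * x + -(μ * ((x + μ - 1) ^ 2)⁻¹))
        (nhdsWithin (1 - μ) (Set.Ioi (1 - μ))) Filter.atBot := by
      apply Filter.Tendsto.add_atBot (C := n ^ 2 * (1 - μ))
      · exact ((continuous_const.mul continuous_id).tendsto _).mono_left nhdsWithin_le_nhds
      · apply Filter.tendsto_neg_atTop_atBot.comp
        apply Filter.Tendsto.const_mul_atTop hμ0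
        apply Filter.Tendsto.inv_tendsto_nhdsGT_zero
        apply tendsto_nhdsWithin_iff.2 ⟨?_, ?_⟩
        · have : Continuous (fun x : ℝ => (x + μ - 1) ^ 2) := by fun_prop
          have h := this.tendsto (1 - μ)
          simp only [sub_add_cancel, sub_self, ne_eq, OfNat.ofNat_ne_zero, not_false_eq_true,
            zero_pow] at h
          exact h.mono_left nhdsWithin_le_nhds
        · filter_upwards [self_mem_nhdsWithin] with x hx
          have hx : 1 - μ < x := hx
          have : 0 < x + μ - 1 := by linarith
          exact Set.mem_Ioi.2 (by positivity)
    refine Filter.tendsto_atBot_mono' _ ?_ hu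
    filter_upwards [self_mem_nhdsWithin] with x hx
    have hx : 1 - μ < x := hx
    rw [fcol_eq _ _ _ _ _ _ x hμ0 hx]
    have p0 : 0 < x := hm.trans hx
    have p1 : 0 < x + μ - 1 := by linarith
    have g1 : 0 ≤ (1 - μ) * q₁ / (x + μ) ^ 2 := by positivity
    have g3 : 0 ≤ (3 / 2) * μ * A₂ / (x + μ - 1) ^ 4 := by positivity
    have g4 : 0 ≤ Mb * (x / (x ^ 2 + T ^ 2) ^ ((3 : ℝ) / 2)) := by positivity
    rw [← div_eq_mul_inv]
    linarith
  have htop : Filter.Tendsto (fcol μ q₁ A₂ Mb T n) Filter.atTop Filter.atTop := by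
    have hu : Filter.Tendsto (fun x : ℝ => n ^ 2 * x + (fcol μ q₁ A₂ Mb T n 1 - n ^ 2))
        Filter.atTop Filter.atTop :=
      Filter.tendsto_atTop_add_const_right _ _
        (Filter.tendsto_id.const_mul_atTop (by positivity))
    refine Filter.tendsto_atTop_mono' _ ?_ hu
    filter_upwards [Filter.eventually_gt_atTop 1] with x hx
    have := hstep 1 x (by linarith) hx
    linarith
  have hcont : ContinuousOn (fcol μ q₁ A₂ Mb T n) (Set.Ioi (1 - μ)) := by
    refine ContinuousOn.congr ?_ (fun x hx => fcol_eq μ q₁ A₂ Mb T n x hμ0 hx)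
    intro x hx
    have hx : 1 - μ < x := hx
    have p1 : x + μ - 1 ≠ 0 := by linarith
    have p2 : x + μ ≠ 0 := by linarith
    have p3 : (0 : ℝ) < x ^ 2 + T ^ 2 := by positivity
    have hr : ContinuousAt (fun x : ℝ => (x ^ 2 + T ^ 2) ^ ((3 : ℝ) / 2)) x :=
      ContinuousAt.rpow_const (by fun_prop) (Or.inl p3.ne')
    have hg : ContinuousAt (fun x : ℝ => x / (x ^ 2 + T ^ 2) ^ ((3 : ℝ) / 2)) x :=
      continuousAt_id.div hr (Real.rpow_pos_of_pos p3 _).ne'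
    apply ContinuousAt.continuousWithinAt
    refine ContinuousAt.sub (by fun_prop) (ContinuousAt.add (ContinuousAt.add
      (ContinuousAt.add ?_ ?_) ?_) (continuousAt_const.mul hg))
    · exact ContinuousAt.div (by fun_prop) (by fun_prop) (pow_ne_zero _ p2)
    · exact ContinuousAt.div (by fun_prop) (by fun_prop) (pow_ne_zero _ p1)
    · exact ContinuousAt.div (by fun_prop) (by fun_prop) (pow_ne_zero _ p1)
  refine ⟨hmono, hbot, htop, ?_⟩
  obtain ⟨a, hfa, ha⟩ := ((hbot.eventually (Filter.eventually_lt_atBot 0)).and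
    self_mem_nhdsWithin).exists
  obtain ⟨b, hfb, hb⟩ := ((htop.eventually (Filter.eventually_gt_atTop 0)).and
    (Filter.eventually_gt_atTop a)).exists
  have ha' : 1 - μ < a := ha
  obtain ⟨c, hc, hfc⟩ := intermediate_value_Icc hb.le
    (hcont.mono (fun x hx => lt_of_lt_of_le ha' hx.1)) (Set.mem_Icc.2 ⟨hfa.le, hfb.le⟩)
  have hc' : c ∈ Set.Ioi (1 - μ) := lt_of_lt_of_le ha' hc.1
  exact ⟨c, ⟨hc', hfc⟩, fun y hy => hmono.injOn hy.1 hc' (hy.2.trans hfc.symm)⟩
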